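/- There exist absolute constants 0 < c ≤ C such that for every θ ∈ (0,1) and every positive integer n, c · n^{(3-θ)/2} θ^{-1} (1-θ)^{-2} ≤ ∫_{A} G(s,t,u,v) ds dt du dv ≤ C · n^{(3-θ)/2} θ^{-1} (1-θ)^{-2}, where A = { (s,t,u,v) ∈ (0,∞)⁴ : 0 < u < 1, 0 < v < n^{-1/2}, s < u^{1/2}, t ≥ n^{1/4} u^{-1/2} s }. -/

import Mathlib

open MeasureTheory Set Real

/-- The integrand `G(s,t,u,v)` from the paper's computation of the completely 1-summing
norm of the identity `OH_n → ℓ^n_p`, with `θ = 2/p'`. Here `p = (s, t, u, v)`. -/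
noncomputable def G (θ : ℝ) (n : ℕ) (p : ℝ × ℝ × ℝ × ℝ) : ℝ :=
  (n : ℝ) ^ (2 : ℕ) * p.1 ^ (-1 - 2 * θ) * p.2.1 ^ (-1 - 2 * θ) *
    min (min (min ((n : ℝ)⁻¹ * p.1 ^ (4 : ℝ) * p.2.2.1 ^ (-2 : ℝ) * p.2.2.2 ^ (-2 : ℝ))
                  ((n : ℝ)⁻¹ * p.2.1 ^ (4 : ℝ)))
             (min (p.1 ^ (4 : ℝ) * p.2.2.1 ^ (-2 : ℝ)) (p.2.1 ^ (4 : ℝ) * p.2.2.2 ^ (-2 : ℝ))))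
        (min (min (p.2.2.1 ^ (-2 : ℝ) * p.2.2.2 ^ (-2 : ℝ)) (p.2.2.1 ^ (-2 : ℝ)))
             (min 1 (p.2.2.2 ^ (-2 : ℝ))))

/-- The region of integration. -/
def A (n : ℕ) : Set (ℝ × ℝ × ℝ × ℝ) :=
  {p | 0 < p.1 ∧ 0 < p.2.1 ∧ 0 < p.2.2.1 ∧ 0 < p.2.2.2 ∧ p.2.2.1 < 1 ∧ p.2.2.2 < (n : ℝ) ^ (-(1/2) : ℝ) ∧ p.1 < p.2.2.1 ^ ((1:ℝ)/2) ∧ (n : ℝ) ^ ((1:ℝ)/4) * p.2.2.1 ^ (-(1/2) : ℝ) * p.1 ≤ p.2.1}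


lemma aux_Ioo (r b : ℝ) (hr : -1 < r) (hb : 0 ≤ b) :
    ∫⁻ s in Ioo 0 b, ENNReal.ofReal (s ^ r) = ENNReal.ofReal (b ^ (r + 1) / (r + 1)) := by
  have hint : IntegrableOn (fun s : ℝ => s ^ r) (Ioo 0 b) := by
    have := intervalIntegral.intervalIntegrable_rpow' (a := 0) (b := b) hr
    rw [intervalIntegrable_iff_integrableOn_Ioo_of_le hb] at this
    exact this
  rw [← ofReal_integral_eq_lintegral_ofReal hint]
  · rw [← integral_Ioc_eq_integral_Ioo, ← intervalIntegral.integral_of_le hb,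
      integral_rpow (Or.inl hr), Real.zero_rpow (by linarith), sub_zero]
  · filter_upwards [ae_restrict_mem measurableSet_Ioo] with s hs
    exact Real.rpow_nonneg hs.1.le _

lemma aux_Ici (r a : ℝ) (hr : r < -1) (ha : 0 < a) :
    ∫⁻ t in Ici a, ENNReal.ofReal (t ^ r) = ENNReal.ofReal (-a ^ (r + 1) / (r + 1)) := by
  rw [setLIntegral_congr (Ioi_ae_eq_Ici (μ := volume) (a := a)).symm]
  rw [← ofReal_integral_eq_lintegral_ofReal (integrableOn_Ioi_rpow_of_lt hr ha)]
  · rw [integral_Ioi_rpow_of_lt hr ha]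
  · filter_upwards [ae_restrict_mem measurableSet_Ioi] with s hs
    exact Real.rpow_nonneg (ha.trans hs).le _

lemma measA (n : ℕ) : MeasurableSet (A n) := by
  unfold A
  simp only [setOf_and]
  refine MeasurableSet.inter (measurableSet_lt (by fun_prop) (by fun_prop)) ?_
  refine MeasurableSet.inter (measurableSet_lt (by fun_prop) (by fun_prop)) ?_
  refine MeasurableSet.inter (measurableSet_lt (by fun_prop) (by fun_prop)) ?_
  refine MeasurableSet.inter (measurableSet_lt (by fun_prop) (by fun_prop)) ?_
  refine MeasurableSet.inter (measurableSet_lt (by fun_prop) (by fun_prop)) ?_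
  refine MeasurableSet.inter (measurableSet_lt (by fun_prop) (by fun_prop)) ?_
  refine MeasurableSet.inter (measurableSet_lt (by fun_prop) (by fun_prop)) ?_
  exact measurableSet_le (by fun_prop) (by fun_prop)

lemma measG (θ : ℝ) (n : ℕ) : Measurable (G θ n) := by
  unfold G
  fun_prop

lemma G_nonneg (θ : ℝ) (n : ℕ) (p : ℝ × ℝ × ℝ × ℝ) (hp : p ∈ A n) : 0 ≤ G θ n p := by
  obtain ⟨hs, ht, hu, hv, -⟩ := hp
  unfold G
  have hn : (0:ℝ) ≤ n := Nat.cast_nonneg n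
  have h1 : ∀ r : ℝ, 0 ≤ p.1 ^ r := fun r => Real.rpow_nonneg hs.le r
  have h2 : ∀ r : ℝ, 0 ≤ p.2.1 ^ r := fun r => Real.rpow_nonneg ht.le r
  have h3 : ∀ r : ℝ, 0 ≤ p.2.2.1 ^ r := fun r => Real.rpow_nonneg hu.le r
  have h4 : ∀ r : ℝ, 0 ≤ p.2.2.2 ^ r := fun r => Real.rpow_nonneg hv.le r
  refine mul_nonneg (mul_nonneg (mul_nonneg (by positivity) (h1 _)) (h2 _)) ?_
  have := h1 4
  have := h2 4
  have := h3 (-2)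
  have := h4 (-2)
  refine le_min (le_min (le_min ?_ ?_) (le_min ?_ ?_))
    (le_min (le_min ?_ ?_) (le_min ?_ ?_)) <;> positivity

lemma G_eq (θ : ℝ) (n : ℕ) (hn : 0 < n) (s t u v : ℝ) (hp : (s, t, u, v) ∈ A n) :
    G θ n (s, t, u, v) =
      (n : ℝ) ^ (2 : ℕ) * u ^ (-2 : ℝ) * (s ^ (3 - 2 * θ) * t ^ (-1 - 2 * θ)) := by
  obtain ⟨hs, ht, hu, hv, hu1, hvn, hsu, hts⟩ := hp
  simp only at hs ht hu hv hu1 hvn hsu hts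
  have hn1 : (1:ℝ) ≤ n := by exact_mod_cast hn
  have hn0 : (0:ℝ) < n := by linarith
  have hU1 : 1 ≤ u ^ (-2 : ℝ) := Real.one_le_rpow_of_pos_of_le_one_of_nonpos hu hu1.le (by norm_num)
  have hVn : (n : ℝ) ≤ v ^ (-2 : ℝ) := by
    have h := Real.rpow_le_rpow_of_nonpos hv hvn.le (by norm_num : (-2:ℝ) ≤ 0)
    rw [← Real.rpow_mul hn0.le] at h
    norm_num at h
    simpa using h
  have hS : s ^ (4:ℝ) * u ^ (-2:ℝ) ≤ 1 := by
    have h := Real.rpow_le_rpow hs.le hsu.le (by norm_num : (0:ℝ) ≤ 4)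
    rw [← Real.rpow_mul hu.le] at h
    have h2 : u ^ (1 / 2 * 4 : ℝ) * u ^ (-2:ℝ) = 1 := by
      rw [← Real.rpow_add hu]; norm_num
    calc _ ≤ u ^ (1 / 2 * 4 : ℝ) * u ^ (-2:ℝ) := by gcongr
      _ = 1 := h2
  have hT : s ^ (4:ℝ) * u ^ (-2:ℝ) ≤ (n:ℝ)⁻¹ * t ^ (4:ℝ) := by
    have h := Real.rpow_le_rpow (by positivity) hts (by norm_num : (0:ℝ) ≤ 4)
    rw [Real.mul_rpow (by positivity) hs.le, Real.mul_rpow (by positivity) (by positivity),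
      ← Real.rpow_mul hu.le, ← Real.rpow_mul hn0.le] at h
    norm_num at h
    rw [le_inv_mul_iff₀ hn0]
    norm_num
    linarith
  have hs4 : 0 < s ^ (4:ℝ) := by positivity
  have ht4 : 0 < t ^ (4:ℝ) := by positivity
  have hX : 0 < s ^ (4:ℝ) * u ^ (-2:ℝ) := by positivity
  unfold G
  simp only
  have hmin : min (min (min ((n : ℝ)⁻¹ * s ^ (4 : ℝ) * u ^ (-2 : ℝ) * v ^ (-2 : ℝ))
                  ((n : ℝ)⁻¹ * t ^ (4 : ℝ)))
             (min (s ^ (4 : ℝ) * u ^ (-2 : ℝ)) (t ^ (4 : ℝ) * v ^ (-2 : ℝ))))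
        (min (min (u ^ (-2 : ℝ) * v ^ (-2 : ℝ)) (u ^ (-2 : ℝ)))
             (min 1 (v ^ (-2 : ℝ)))) = s ^ (4 : ℝ) * u ^ (-2 : ℝ) := by
    apply le_antisymm
    · exact (min_le_left _ _).trans ((min_le_right _ _).trans (min_le_left _ _))
    · generalize u ^ (-2 : ℝ) = U at *
      generalize v ^ (-2 : ℝ) = V at *
      generalize s ^ (4 : ℝ) = S at *
      generalize t ^ (4 : ℝ) = T at *
      have hinv : (n:ℝ)⁻¹ ≤ 1 := inv_le_one_of_one_le₀ hn1
      refine le_min (le_min (le_min ?_ hT) (le_min le_rfl ?_))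
        (le_min (le_min ?_ ?_) (le_min hS ?_))
      · have : (n:ℝ)⁻¹ * S * U * V = (S * U) * ((n:ℝ)⁻¹ * V) := by ring
        rw [this]
        apply le_mul_of_one_le_right hX.le
        rw [le_inv_mul_iff₀ hn0]; linarith
      · nlinarith
      · nlinarith
      · linarith
      · linarith
  rw [hmin]
  have : s ^ (3 - 2 * θ) = s ^ (-1 - 2 * θ) * s ^ (4:ℝ) := by
    rw [← Real.rpow_add hs]; congr 1; ring
  rw [this]; ring

lemma inner (θ : ℝ) (h0 : 0 < θ) (h1 : θ < 1) (n : ℕ) (hn : 0 < n) (u : ℝ) (hu : 0 < u) :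
    ∫⁻ s in Ioo 0 (u ^ ((1:ℝ)/2)), ∫⁻ t in Ici ((n : ℝ) ^ ((1:ℝ)/4) * u ^ (-(1/2) : ℝ) * s),
      ENNReal.ofReal ((n : ℝ) ^ (2 : ℕ) * u ^ (-2 : ℝ) * (s ^ (3 - 2 * θ) * t ^ (-1 - 2 * θ)))
    = ENNReal.ofReal ((n : ℝ) ^ (2 - θ / 2) * u ^ (-θ) / (8 * θ * (1 - θ))) := by
  have hn0 : (0:ℝ) < n := by exact_mod_cast hn
  have step : ∀ s ∈ Ioo 0 (u ^ ((1:ℝ)/2)),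
      ∫⁻ t in Ici ((n : ℝ) ^ ((1:ℝ)/4) * u ^ (-(1/2) : ℝ) * s),
      ENNReal.ofReal ((n : ℝ) ^ (2 : ℕ) * u ^ (-2 : ℝ) * (s ^ (3 - 2 * θ) * t ^ (-1 - 2 * θ)))
      = ENNReal.ofReal ((n : ℝ) ^ (2 - θ / 2) * u ^ (-2 + θ) / (2 * θ)) *
        ENNReal.ofReal (s ^ (3 - 4 * θ)) := by
    intro s hs
    have hs0 : 0 < s := hs.1
    have e : ∀ t : ℝ, ENNReal.ofReal
        ((n : ℝ) ^ (2 : ℕ) * u ^ (-2 : ℝ) * (s ^ (3 - 2 * θ) * t ^ (-1 - 2 * θ))) =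
        ENNReal.ofReal ((n : ℝ) ^ (2 : ℕ) * u ^ (-2 : ℝ) * s ^ (3 - 2 * θ)) *
          ENNReal.ofReal (t ^ (-1 - 2 * θ)) := by
      intro t
      rw [← ENNReal.ofReal_mul (by positivity), mul_assoc _ (s ^ _)]
    simp_rw [e]
    rw [lintegral_const_mul _ (by fun_prop), aux_Ici _ _ (by linarith) (by positivity),
      ← ENNReal.ofReal_mul (by positivity), ← ENNReal.ofReal_mul (by positivity)]
    congr 1
    have e1 : -1 - 2 * θ + 1 = -(2 * θ) := by ring
    rw [e1, neg_div_neg_eq, Real.mul_rpow (by positivity) hs0.le,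
      Real.mul_rpow (by positivity) (by positivity), ← Real.rpow_mul hu.le, ← Real.rpow_mul hn0.le]
    have a1 : (n:ℝ) ^ (2 - θ / 2) = (n:ℝ) ^ (2:ℕ) * (n:ℝ) ^ (1 / 4 * -(2 * θ)) := by
      rw [← Real.rpow_natCast, ← Real.rpow_add hn0]; congr 1; push_cast; ring
    have a2 : u ^ (-2 + θ) = u ^ (-2:ℝ) * u ^ (-(1 / 2) * -(2 * θ)) := by
      rw [← Real.rpow_add hu]; congr 1; ring
    have a3 : s ^ (3 - 4 * θ) = s ^ (3 - 2 * θ) * s ^ (-(2 * θ)) := by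
      rw [← Real.rpow_add hs0]; congr 1; ring
    rw [a1, a2, a3]; ring
  rw [setLIntegral_congr_fun measurableSet_Ioo step, lintegral_const_mul _ (by fun_prop),
    aux_Ioo _ _ (by linarith) (by positivity), ← ENNReal.ofReal_mul (by positivity)]
  congr 1
  rw [← Real.rpow_mul hu.le]
  have a2 : u ^ (-θ) = u ^ (-2 + θ) * u ^ (1 / 2 * (3 - 4 * θ + 1)) := by
    rw [← Real.rpow_add hu]; congr 1; ring
  rw [a2]
  have : 1 - θ ≠ 0 := by linarith
  have h4 : 3 - 4 * θ + 1 = 4 * (1 - θ) := by ring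
  rw [h4]
  field_simp
  ring

lemma ind_eq (θ : ℝ) (n : ℕ) (hn : 0 < n) (s t u v : ℝ) :
    (A n).indicator (fun p => ENNReal.ofReal (G θ n p)) (s, t, u, v) =
    (Ioo (0:ℝ) 1).indicator (fun u => (Ioo (0:ℝ) ((n : ℝ) ^ (-(1/2) : ℝ))).indicator (fun _ =>
      (Ioo (0:ℝ) (u ^ ((1:ℝ)/2))).indicator (fun s =>
        (Ici ((n : ℝ) ^ ((1:ℝ)/4) * u ^ (-(1/2) : ℝ) * s)).indicator (fun t =>
          ENNReal.ofReal ((n : ℝ) ^ (2 : ℕ) * u ^ (-2 : ℝ) *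
            (s ^ (3 - 2 * θ) * t ^ (-1 - 2 * θ)))) t) s) v) u := by
  have hn0 : (0:ℝ) < n := by exact_mod_cast hn
  by_cases hp : (s, t, u, v) ∈ A n
  · rw [indicator_of_mem hp, G_eq θ n hn s t u v hp]
    obtain ⟨hs, ht, hu, hv, hu1, hvn, hsu, hts⟩ := hp
    have h1 : u ∈ Ioo (0:ℝ) 1 := ⟨hu, hu1⟩
    have h2 : v ∈ Ioo (0:ℝ) ((n : ℝ) ^ (-(1/2) : ℝ)) := ⟨hv, hvn⟩
    have h3 : s ∈ Ioo (0:ℝ) (u ^ ((1:ℝ)/2)) := ⟨hs, hsu⟩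
    have h4 : t ∈ Ici ((n : ℝ) ^ ((1:ℝ)/4) * u ^ (-(1/2) : ℝ) * s) := hts
    rw [indicator_of_mem h1, indicator_of_mem h2, indicator_of_mem h3, indicator_of_mem h4]
  · rw [indicator_of_notMem hp]
    symm
    by_cases h1 : u ∈ Ioo (0:ℝ) 1
    swap
    · rw [indicator_of_notMem h1]
    rw [indicator_of_mem h1]
    by_cases h2 : v ∈ Ioo (0:ℝ) ((n : ℝ) ^ (-(1/2) : ℝ))
    swap
    · rw [indicator_of_notMem h2]
    rw [indicator_of_mem h2]
    by_cases h3 : s ∈ Ioo (0:ℝ) (u ^ ((1:ℝ)/2))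
    swap
    · rw [indicator_of_notMem h3]
    rw [indicator_of_mem h3]
    apply indicator_of_notMem
    intro h4
    have hu := h1.1
    have hs := h3.1
    have : 0 < (n : ℝ) ^ ((1:ℝ)/4) * u ^ (-(1/2) : ℝ) * s := by positivity
    exact hp ⟨h3.1, lt_of_lt_of_le this h4, h1.1, h2.1, h1.2, h2.2, h3.2, h4⟩

lemma total (θ : ℝ) (h0 : 0 < θ) (h1 : θ < 1) (n : ℕ) (hn : 0 < n) :
    ∫⁻ p in A n, ENNReal.ofReal (G θ n p) =
      ENNReal.ofReal ((n : ℝ) ^ ((3 - θ) / 2) / (8 * θ * (1 - θ) ^ 2)) := by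
  have hn0 : (0:ℝ) < n := by exact_mod_cast hn
  have h1' : 0 < 1 - θ := by linarith
  have hm : Measurable ((A n).indicator (fun p => ENNReal.ofReal (G θ n p))) :=
    ((measG θ n).ennreal_ofReal).indicator (measA n)
  rw [← lintegral_indicator (measA n)]
  rw [← (volume_preserving_prodAssoc (α₁ := ℝ) (β₁ := ℝ) (γ₁ := ℝ × ℝ)).lintegral_comp hm]
  rw [Measure.volume_eq_prod, lintegral_prod_symm _ (by
    exact (hm.comp MeasurableEquiv.prodAssoc.measurable).aemeasurable)]
  have e1 : ∀ y : ℝ × ℝ, ∫⁻ x : ℝ × ℝ, (A n).indicator (fun p => ENNReal.ofReal (G θ n p))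
      (MeasurableEquiv.prodAssoc (x, y)) =
      (Ioo (0:ℝ) 1).indicator (fun u => ENNReal.ofReal (u ^ (-θ))) y.1 *
      (Ioo (0:ℝ) ((n : ℝ) ^ (-(1/2) : ℝ))).indicator
        (fun _ => ENNReal.ofReal ((n : ℝ) ^ (2 - θ / 2) / (8 * θ * (1 - θ)))) y.2 := by
    rintro ⟨u, v⟩
    have hm2 : Measurable (fun x : ℝ × ℝ => (A n).indicator (fun p => ENNReal.ofReal (G θ n p))
      (MeasurableEquiv.prodAssoc (x, (u, v)))) :=
      hm.comp (MeasurableEquiv.prodAssoc.measurable.comp (by fun_prop))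
    rw [Measure.volume_eq_prod, lintegral_prod _ hm2.aemeasurable]
    change ∫⁻ s : ℝ, ∫⁻ t : ℝ, (A n).indicator (fun p => ENNReal.ofReal (G θ n p))
      (s, t, u, v) = _
    simp_rw [ind_eq θ n hn]
    by_cases hu : u ∈ Ioo (0:ℝ) 1
    swap
    · simp [indicator_of_notMem hu]
    by_cases hv : v ∈ Ioo (0:ℝ) ((n : ℝ) ^ (-(1/2) : ℝ))
    swap
    · simp only [indicator_of_notMem hv, indicator_of_mem hu]
      simp
    simp only [indicator_of_mem hu, indicator_of_mem hv]
    have hu0 := hu.1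
    rw [← ENNReal.ofReal_mul (by positivity), show u ^ (-θ) * ((n : ℝ) ^ (2 - θ / 2) / (8 * θ * (1 - θ))) = (n : ℝ) ^ (2 - θ / 2) * u ^ (-θ) / (8 * θ * (1 - θ)) by ring,
      ← inner θ h0 h1 n hn u hu.1, ← lintegral_indicator measurableSet_Ioo]
    apply lintegral_congr
    intro s
    by_cases hs : s ∈ Ioo (0:ℝ) (u ^ ((1:ℝ)/2))
    swap
    · simp only [indicator_of_notMem hs]
      simp
    · simp only [indicator_of_mem hs]
      rw [lintegral_indicator measurableSet_Ici]
  rw [lintegral_congr e1, Measure.volume_eq_prod,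
    lintegral_prod_mul (Measurable.aemeasurable (by
      exact Measurable.indicator (by fun_prop) measurableSet_Ioo))
      (Measurable.aemeasurable (by
      exact Measurable.indicator (by fun_prop) measurableSet_Ioo)),
    lintegral_indicator measurableSet_Ioo, lintegral_indicator measurableSet_Ioo,
    aux_Ioo _ _ (by linarith) (by norm_num), setLIntegral_const, Real.volume_Ioo,
    ← ENNReal.ofReal_mul (by positivity), ← ENNReal.ofReal_mul (by
      apply div_nonneg (by positivity); linarith)]
  congr 1
  have a : (n : ℝ) ^ ((3 - θ) / 2) = (n : ℝ) ^ (2 - θ / 2) * (n : ℝ) ^ (-(1/2) : ℝ) := by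
    rw [← Real.rpow_add hn0]; congr 1; ring
  rw [a, Real.one_rpow, sub_zero, show -θ + 1 = 1 - θ by ring]
  field_simp

theorem stmt_5 :
    ∃ c C : ℝ, 0 < c ∧ c ≤ C ∧ ∀ θ : ℝ, 0 < θ → θ < 1 → ∀ n : ℕ, 0 < n →
      c * ((n : ℝ) ^ ((3 - θ) / 2) * θ ^ (-1 : ℝ) * (1 - θ) ^ (-2 : ℝ)) ≤ (∫ p in A n, G θ n p) ∧
      (∫ p in A n, G θ n p) ≤ C * ((n : ℝ) ^ ((3 - θ) / 2) * θ ^ (-1 : ℝ) * (1 - θ) ^ (-2 : ℝ)) := by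
  refine ⟨1 / 8, 1 / 8, by norm_num, le_rfl, ?_⟩
  intro θ h0 h1 n hn
  have h1' : 0 < 1 - θ := by linarith
  have key : ∫ p in A n, G θ n p =
      1 / 8 * ((n : ℝ) ^ ((3 - θ) / 2) * θ ^ (-1 : ℝ) * (1 - θ) ^ (-2 : ℝ)) := by
    rw [integral_eq_lintegral_of_nonneg_ae _ (measG θ n).aestronglyMeasurable, total θ h0 h1 n hn,
      ENNReal.toReal_ofReal (by positivity), Real.rpow_neg_one, Real.rpow_neg h1'.le]
    · norm_num
      field_simp
    · filter_upwards [ae_restrict_mem (measA n)] with p hp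
      exact G_nonneg θ n p hp
  exact ⟨key.ge, key.le⟩
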